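/- (Explicit pseudoinverse for the uniform distribution on full rankings, case ℓ = m.) Let ℓ = m ≥ 1 and let ν be the uniform distribution over rankings (bijections Fin m → Fin m). Then the matrix G := (1/m)·1 1ᵀ + (m−1)·I − ((m−1)/m)·Σ_j 1_j 1_jᵀ − ((m−1)/m)·Σ_a 1_a 1_aᵀ is the Moore–Penrose pseudoinverse of Γ_ν, i.e., Γ_ν G Γ_ν = Γ_ν, G Γ_ν G = G, (Γ_ν G)ᵀ = Γ_ν G and (G Γ_ν)ᵀ = G Γ_ν. -/

import Mathlib

/-!
Write `O = 1 1ᵀ`, `S = Σ_j 1_j 1_jᵀ`, `A = Σ_a 1_a 1_aᵀ`. They satisfy `S S = m S`, `A A = m A`,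
`S A = A S = O`, `S O = A O = m O` and `O O = m² O`, so `P = O / m²` and
`Q = I - S / m - A / m + O / m²` are orthogonal symmetric idempotents.

Averaging over permutations gives the entries of `Γ`: `1 / m` on the diagonal,
`1 / (m (m - 1))` at `((j,a),(k,b))` with `j ≠ k` and `a ≠ b`, and `0` elsewhere. These values come
from relabelling symmetry and row sums, with no counting of permutations. Hence
`Γ = P + (m - 1)⁻¹ Q`, while `G = P + (m - 1) Q`, and therefore `Γ G = G Γ = P + Q`, from which
the four Penrose identities follow. For `m = 1` one has `Q = 0`, so the junk value `0⁻¹ = 0`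
is harmless.
-/

open Matrix BigOperators
open scoped Classical

/-- Indicator vector of a slate `s : Fin ℓ → Fin m` in `ℝ^{(Fin ℓ) × (Fin m)}`. -/
noncomputable def rankInd {ℓ m : ℕ} (s : Fin ℓ → Fin m) : Fin ℓ × Fin m → ℝ :=
  fun p => if s p.1 = p.2 then 1 else 0

/-- Second-moment matrix `Γ_ν := Σ_s ν(s)·1_s 1_sᵀ` of the uniform distribution `ν`
over rankings (injective functions `Fin ℓ → Fin m`). -/
noncomputable def rankGammaUnif (ℓ m : ℕ) :
    Matrix (Fin ℓ × Fin m) (Fin ℓ × Fin m) ℝ :=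
  ∑ s : {s : Fin ℓ → Fin m // Function.Injective s},
    ((Fintype.card {s : Fin ℓ → Fin m // Function.Injective s} : ℝ))⁻¹ •
      vecMulVec (rankInd s.1) (rankInd s.1)

/-- The 0/1 vector `1_j` supported on all coordinates `(j,a)` of slot `j`. -/
noncomputable def rankOneJ {ℓ m : ℕ} (j : Fin ℓ) : Fin ℓ × Fin m → ℝ :=
  fun p => if p.1 = j then 1 else 0

/-- The 0/1 vector `1_a` supported on all coordinates `(j,a)` for the fixed action `a`. -/
noncomputable def rankOneA {ℓ m : ℕ} (a : Fin m) : Fin ℓ × Fin m → ℝ :=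
  fun p => if p.2 = a then 1 else 0

/-- The all-ones vector. -/
noncomputable def rankOnes (ℓ m : ℕ) : Fin ℓ × Fin m → ℝ := fun _ => 1

/-- The matrix `Σ_j 1_j 1_jᵀ`, with entry `1` exactly when the slots agree. -/
noncomputable def slotMat (m : ℕ) : Matrix (Fin m × Fin m) (Fin m × Fin m) ℝ :=
  Matrix.of fun p q => if p.1 = q.1 then 1 else 0

/-- The matrix `Σ_a 1_a 1_aᵀ`, with entry `1` exactly when the actions agree. -/
noncomputable def actMat (m : ℕ) : Matrix (Fin m × Fin m) (Fin m × Fin m) ℝ :=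
  Matrix.of fun p q => if p.2 = q.2 then 1 else 0

/-- The all-ones matrix `1 1ᵀ`. -/
noncomputable def onesMat (m : ℕ) : Matrix (Fin m × Fin m) (Fin m × Fin m) ℝ :=
  Matrix.of fun _ _ => 1

/-- The orthogonal projection onto the constant vectors. -/
noncomputable def projConst (m : ℕ) : Matrix (Fin m × Fin m) (Fin m × Fin m) ℝ :=
  ((m : ℝ)⁻¹ * (m : ℝ)⁻¹) • onesMat m

/-- The orthogonal projection onto the arrays all of whose row and column sums vanish. -/
noncomputable def projDoubly (m : ℕ) : Matrix (Fin m × Fin m) (Fin m × Fin m) ℝ :=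
  1 - (m : ℝ)⁻¹ • slotMat m - (m : ℝ)⁻¹ • actMat m + ((m : ℝ)⁻¹ * (m : ℝ)⁻¹) • onesMat m

lemma sum_slot_eq (m : ℕ) :
    ∑ j : Fin m, vecMulVec (rankOneJ j) (rankOneJ j) = slotMat m := by
  ext p q
  simp [Matrix.sum_apply, vecMulVec_apply, rankOneJ, slotMat, eq_comm]

lemma sum_act_eq (m : ℕ) :
    ∑ a : Fin m, vecMulVec (rankOneA a) (rankOneA a) = actMat m := by
  ext p q
  simp [Matrix.sum_apply, vecMulVec_apply, rankOneA, actMat, eq_comm]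

lemma ones_eq (m : ℕ) : vecMulVec (rankOnes m m) (rankOnes m m) = onesMat m := by
  ext p q
  simp [vecMulVec_apply, rankOnes, onesMat]

lemma slot_mul_slot (m : ℕ) : slotMat m * slotMat m = (m : ℝ) • slotMat m := by
  ext p q
  by_cases h : p.1 = q.1 <;> simp [Matrix.mul_apply, Fintype.sum_prod_type, slotMat, h]

lemma act_mul_act (m : ℕ) : actMat m * actMat m = (m : ℝ) • actMat m := by
  ext p q
  by_cases h : p.2 = q.2 <;> simp [Matrix.mul_apply, Fintype.sum_prod_type, actMat, h]

lemma slot_mul_act (m : ℕ) : slotMat m * actMat m = onesMat m := by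
  ext p q
  simp [Matrix.mul_apply, Fintype.sum_prod_type, actMat, slotMat, onesMat]

lemma act_mul_slot (m : ℕ) : actMat m * slotMat m = onesMat m := by
  ext p q
  simp [Matrix.mul_apply, Fintype.sum_prod_type, actMat, slotMat, onesMat]

lemma slot_mul_ones (m : ℕ) : slotMat m * onesMat m = (m : ℝ) • onesMat m := by
  ext p q
  simp [Matrix.mul_apply, Fintype.sum_prod_type_right, slotMat, onesMat, -Finset.sum_boole]

lemma ones_mul_slot (m : ℕ) : onesMat m * slotMat m = (m : ℝ) • onesMat m := by
  ext p q
  simp [Matrix.mul_apply, Fintype.sum_prod_type_right, slotMat, onesMat, -Finset.sum_boole]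

lemma act_mul_ones (m : ℕ) : actMat m * onesMat m = (m : ℝ) • onesMat m := by
  ext p q
  simp [Matrix.mul_apply, Fintype.sum_prod_type, actMat, onesMat, -Finset.sum_boole]

lemma ones_mul_act (m : ℕ) : onesMat m * actMat m = (m : ℝ) • onesMat m := by
  ext p q
  simp [Matrix.mul_apply, Fintype.sum_prod_type, actMat, onesMat, -Finset.sum_boole]

lemma ones_mul_ones (m : ℕ) : onesMat m * onesMat m = ((m : ℝ) * m) • onesMat m := by
  ext p q
  simp [Matrix.mul_apply, onesMat]

lemma projConst_sq {m : ℕ} (hm : (m : ℝ) ≠ 0) :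
    projConst m * projConst m = projConst m := by
  simp only [projConst, smul_mul_assoc, mul_smul_comm, ones_mul_ones]
  match_scalars
  field_simp

lemma projConst_mul_projDoubly {m : ℕ} (hm : (m : ℝ) ≠ 0) :
    projConst m * projDoubly m = 0 := by
  simp only [projConst, projDoubly, mul_add, mul_sub, smul_mul_assoc, mul_smul_comm, mul_one,
    ones_mul_ones, ones_mul_slot, ones_mul_act]
  match_scalars
  field_simp
  ring

lemma projDoubly_mul_projConst {m : ℕ} (hm : (m : ℝ) ≠ 0) :
    projDoubly m * projConst m = 0 := by
  simp only [projConst, projDoubly, add_mul, sub_mul, smul_mul_assoc, mul_smul_comm, one_mul,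
    ones_mul_ones, slot_mul_ones, act_mul_ones]
  match_scalars
  field_simp
  ring

lemma projDoubly_sq {m : ℕ} (hm : (m : ℝ) ≠ 0) :
    projDoubly m * projDoubly m = projDoubly m := by
  simp only [projDoubly, add_mul, sub_mul, mul_add, mul_sub, smul_mul_assoc, mul_smul_comm,
    one_mul, mul_one, ones_mul_ones, slot_mul_ones, act_mul_ones, ones_mul_slot, ones_mul_act,
    slot_mul_slot, act_mul_act, slot_mul_act, act_mul_slot]
  match_scalars <;> field_simp <;> ring

lemma projConst_transpose (m : ℕ) : (projConst m)ᵀ = projConst m := by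
  ext p q
  simp [projConst, onesMat]

lemma projDoubly_transpose (m : ℕ) : (projDoubly m)ᵀ = projDoubly m := by
  ext p q
  simp [projDoubly, onesMat, slotMat, actMat, Matrix.one_apply, eq_comm]

lemma projDoubly_one : projDoubly 1 = 0 := by
  ext p q
  simp [projDoubly, onesMat, slotMat, actMat, Subsingleton.elim p q]

lemma gamma_apply (m : ℕ) (p q : Fin m × Fin m) :
    rankGammaUnif m m p q = ∑ s : {s : Fin m → Fin m // Function.Injective s},
      ((Fintype.card {s : Fin m → Fin m // Function.Injective s} : ℝ))⁻¹ *
        (rankInd s.1 p * rankInd s.1 q) := by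
  simp [rankGammaUnif, Matrix.sum_apply, vecMulVec_apply]

/-- Swapping two action labels in every ranking preserves the uniform distribution. -/
lemma gamma_swap {m : ℕ} (j k a b c d : Fin m) :
    rankGammaUnif m m (j, Equiv.swap c d a) (k, Equiv.swap c d b) =
      rankGammaUnif m m (j, a) (k, b) := by
  rw [gamma_apply, gamma_apply]
  let f : {s : Fin m → Fin m // Function.Injective s} →
      {s : Fin m → Fin m // Function.Injective s} :=
    fun s => ⟨fun i => Equiv.swap c d (s.1 i), (Equiv.swap c d).injective.comp s.2⟩
  have hf : Function.Involutive f := by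
    intro s
    ext i
    simp [f]
  refine Fintype.sum_equiv hf.toPerm _ _ fun s => ?_
  have key : ∀ x y : Fin m, Equiv.swap c d x = y ↔ x = Equiv.swap c d y := fun x y => by
    rw [← Equiv.symm_apply_eq, Equiv.symm_swap, eq_comm, ← Equiv.symm_apply_eq,
      Equiv.symm_swap, eq_comm]
  simp [f, rankInd, key]

/-- A ranking puts exactly one action into slot `k`. -/
lemma gamma_row_sum {m : ℕ} (j k a : Fin m) :
    ∑ b, rankGammaUnif m m (j, a) (k, b) = rankGammaUnif m m (j, a) (j, a) := by
  simp only [gamma_apply]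
  rw [Finset.sum_comm]
  refine Finset.sum_congr rfl fun s _ => ?_
  by_cases h : s.1 j = a <;> simp [rankInd, h]

lemma gamma_diag_sum {m : ℕ} (j : Fin m) :
    ∑ a, rankGammaUnif m m (j, a) (j, a) = 1 := by
  simp only [gamma_apply]
  rw [Finset.sum_comm]
  have : Nonempty {s : Fin m → Fin m // Function.Injective s} := ⟨⟨id, Function.injective_id⟩⟩
  simp [rankInd]

lemma gamma_diag {m : ℕ} (j a : Fin m) :
    rankGammaUnif m m (j, a) (j, a) = (m : ℝ)⁻¹ := by
  have h := gamma_diag_sum j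
  have hc : ∀ b, rankGammaUnif m m (j, b) (j, b) = rankGammaUnif m m (j, a) (j, a) := fun b => by
    simpa using gamma_swap j j a a a b
  simp only [hc] at h
  simp only [Finset.sum_const, Finset.card_univ, Fintype.card_fin, nsmul_eq_mul] at h
  exact eq_inv_of_mul_eq_one_right h

lemma gamma_same_slot {m : ℕ} (j a b : Fin m) (hab : a ≠ b) :
    rankGammaUnif m m (j, a) (j, b) = 0 := by
  rw [gamma_apply]
  refine Finset.sum_eq_zero fun s _ => ?_
  by_cases h : s.1 j = a <;> simp [rankInd, h, hab]

lemma gamma_same_act {m : ℕ} (j k a : Fin m) (hjk : j ≠ k) :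
    rankGammaUnif m m (j, a) (k, a) = 0 := by
  rw [gamma_apply]
  refine Finset.sum_eq_zero fun s _ => ?_
  by_cases h : s.1 j = a
  · have : s.1 k ≠ a := fun h' => hjk (s.2 (h.trans h'.symm))
    simp [rankInd, this]
  · simp [rankInd, h]

lemma gamma_off {m : ℕ} (j k a b : Fin m) (hjk : j ≠ k) (hab : a ≠ b) :
    ((m : ℝ) - 1) * rankGammaUnif m m (j, a) (k, b) = (m : ℝ)⁻¹ := by
  have h := gamma_row_sum j k a
  -- Swapping `b` with `c` fixes `a`, so the entries with `c ≠ a` agree.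
  have hc : ∀ c, rankGammaUnif m m (j, a) (k, c) = rankGammaUnif m m (j, a) (k, b) -
      if c = a then rankGammaUnif m m (j, a) (k, b) else 0 := by
    intro c
    by_cases hca : c = a
    · simp [hca, gamma_same_act j k a hjk]
    · have := gamma_swap j k a b b c
      rw [Equiv.swap_apply_of_ne_of_ne hab (Ne.symm hca), Equiv.swap_apply_left] at this
      simp [hca, this]
  rw [Finset.sum_congr rfl fun c _ => hc c, gamma_diag] at h
  simp only [Finset.sum_sub_distrib, Finset.sum_const, Finset.card_univ, Fintype.card_fin,
    nsmul_eq_mul, Finset.sum_ite_eq', Finset.mem_univ, if_true] at h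
  linarith

lemma gamma_eq {m : ℕ} (hm : (m : ℝ) ≠ 0) :
    rankGammaUnif m m = projConst m + ((m : ℝ) - 1)⁻¹ • projDoubly m := by
  ext ⟨j, a⟩ ⟨k, b⟩
  by_cases h1 : (m : ℝ) - 1 = 0
  · obtain rfl : m = 1 := by exact_mod_cast sub_eq_zero.mp h1
    rw [Subsingleton.elim k j, Subsingleton.elim b a, gamma_diag]
    simp [projConst, onesMat]
  by_cases hjk : j = k
  · subst hjk
    by_cases hab : a = b
    · subst hab
      rw [gamma_diag]
      simp [projConst, projDoubly, onesMat, slotMat, actMat]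
      field_simp
      ring
    · rw [gamma_same_slot j a b hab]
      simp [projConst, projDoubly, onesMat, slotMat, actMat, hab]
      field_simp
      ring
  · by_cases hab : a = b
    · subst hab
      rw [gamma_same_act j k a hjk]
      simp [projConst, projDoubly, onesMat, slotMat, actMat, hjk]
      field_simp
      ring
    · apply mul_left_cancel₀ h1
      rw [gamma_off j k a b hjk hab]
      simp [projConst, projDoubly, onesMat, slotMat, actMat, hjk, hab]
      field_simp
      ring

/-- (Explicit pseudoinverse for the uniform distribution on full
rankings, case ℓ = m.) With `ν` uniform over bijections `Fin m → Fin m` (injective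
functions `Fin m → Fin m`), the matrix
`G := (1/m)·1 1ᵀ + (m−1)·I − ((m−1)/m)·Σ_j 1_j 1_jᵀ − ((m−1)/m)·Σ_a 1_a 1_aᵀ`
is the Moore–Penrose pseudoinverse of `Γ_ν`. -/
theorem uniform_full_ranking_pseudoinverse
    {m : ℕ} (hm : 1 ≤ m)
    (G : Matrix (Fin m × Fin m) (Fin m × Fin m) ℝ)
    (hGdef : G =
      ((m : ℝ))⁻¹ • vecMulVec (rankOnes m m) (rankOnes m m)
        + ((m : ℝ) - 1) • (1 : Matrix (Fin m × Fin m) (Fin m × Fin m) ℝ)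
        - (((m : ℝ) - 1) / (m : ℝ)) • ∑ j : Fin m, vecMulVec (rankOneJ j) (rankOneJ j)
        - (((m : ℝ) - 1) / (m : ℝ)) • ∑ a : Fin m, vecMulVec (rankOneA a) (rankOneA a)) :
    rankGammaUnif m m * G * rankGammaUnif m m = rankGammaUnif m m ∧
    G * rankGammaUnif m m * G = G ∧
    (rankGammaUnif m m * G)ᵀ = rankGammaUnif m m * G ∧
    (G * rankGammaUnif m m)ᵀ = G * rankGammaUnif m m := by
  have hm0 : (m : ℝ) ≠ 0 := by
    have : m ≠ 0 := by omega
    exact_mod_cast this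
  have hG : G = projConst m + ((m : ℝ) - 1) • projDoubly m := by
    rw [hGdef, sum_slot_eq, sum_act_eq, ones_eq, projConst, projDoubly]
    match_scalars <;> field_simp <;> ring
  -- `(m - 1)⁻¹ (m - 1)` acts as `1` on `Q`, because `Q = 0` when `m = 1`.
  have hQ : (((m : ℝ) - 1)⁻¹ * ((m : ℝ) - 1)) • projDoubly m = projDoubly m := by
    by_cases h1 : (m : ℝ) - 1 = 0
    · obtain rfl : m = 1 := by exact_mod_cast sub_eq_zero.mp h1
      simp [projDoubly_one]
    · rw [inv_mul_cancel₀ h1, one_smul]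
  have h1 : rankGammaUnif m m * G = projConst m + projDoubly m := by
    rw [hG, gamma_eq hm0]
    simp only [add_mul, mul_add, smul_mul_assoc, mul_smul_comm, projConst_sq hm0,
      projConst_mul_projDoubly hm0, projDoubly_mul_projConst hm0, projDoubly_sq hm0, smul_zero,
      add_zero, zero_add, smul_smul]
    rw [mul_comm, hQ]
  have h2 : G * rankGammaUnif m m = projConst m + projDoubly m := by
    rw [hG, gamma_eq hm0]
    simp only [add_mul, mul_add, smul_mul_assoc, mul_smul_comm, projConst_sq hm0,
      projConst_mul_projDoubly hm0, projDoubly_mul_projConst hm0, projDoubly_sq hm0, smul_zero,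
      add_zero, zero_add, smul_smul]
    rw [hQ]
  refine ⟨?_, ?_, ?_, ?_⟩
  · rw [h1, gamma_eq hm0]
    simp only [add_mul, mul_add, mul_smul_comm, projConst_sq hm0, projConst_mul_projDoubly hm0,
      projDoubly_mul_projConst hm0, projDoubly_sq hm0, add_zero, zero_add]
  · rw [h2, hG]
    simp only [add_mul, mul_add, mul_smul_comm, projConst_sq hm0, projConst_mul_projDoubly hm0,
      projDoubly_mul_projConst hm0, projDoubly_sq hm0, add_zero, zero_add]
  · rw [h1, transpose_add, projConst_transpose, projDoubly_transpose]
  · rw [h2, transpose_add, projConst_transpose, projDoubly_transpose]
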